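/- Let u ∈ H¹(𝕋³; ℝ³) and define Γ̄(ℓ) = (1/(4π)) ∫_{S²} ∫_{𝕋³} u(x)·u(x+ℓn) dx dS(n). Then |Γ̄'(ℓ)| ≤ ℓ ‖∇u‖_{L²(𝕋³)}² for all ℓ > 0. -/

import Mathlib

open MeasureTheory Metric Filter Real Set
open scoped Topology RealInnerProductSpace ENNReal

noncomputable section

abbrev E3 := EuclideanSpace ℝ (Fin 3)

/-- Fundamental domain of the torus `𝕋³ = ℝ³/ℤ³`. -/
def fundDom : Set E3 := {x | ∀ i, x i ∈ Set.Ico (0:ℝ) 1}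

/-- Surface measure on the unit sphere `S² ⊆ ℝ³` (total mass `4π`). -/
def sphμ : Measure (Metric.sphere (0:E3) 1) := (volume : Measure E3).toSphere

/-- Standard basis vectors of `ℝ³`. -/
def e3 (i : Fin 3) : E3 := EuclideanSpace.single i 1


/-- Frobenius norm squared of the gradient: `∑ᵢⱼ (∂ⱼ uⁱ)²`. -/
def gradSq (u : E3 → E3) (x : E3) : ℝ := ∑ i, ∑ j, (fderiv ℝ u x (e3 j) i) ^ 2

/-! For a unit vector `n`, put `g = ∂ₙu` and `Γₙ(s) = ∫ u(x) · u(x + s n) dx`. Differentiating once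
gives `Γₙ'(s) = ∫ u(x) · g(x + s n) dx`. By periodicity the shift can be moved onto the other
factor, so that a second derivative again falls on `u`, and `Γₙ''(s) = -∫ g(x) · g(x + s n) dx`
although `u` is only `C¹`. An autocorrelation is largest in absolute value at `0`: applied to `g`
this bounds `|Γₙ''|` by `∫ |g|²`, and applied to `u` it gives `Γₙ'(0) = 0`. The mean value
inequality then yields `|Γₙ'(ℓ)| ≤ ℓ ∫ |∂ₙu|²`, which is averaged over `n`. -/

lemma hasDerivAt_setIntegral_of_subset_isCompact {X G : Type*} [TopologicalSpace X]
    [MeasurableSpace X] [OpensMeasurableSpace X] [NormedAddCommGroup G] [NormedSpace ℝ G]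
    [SecondCountableTopologyEither X G] {μ : Measure X} [IsLocallyFiniteMeasure μ] {s K : Set X}
    (hK : IsCompact K) (hsK : s ⊆ K) (hs : MeasurableSet s) {F F' : ℝ → X → G}
    (hF : ∀ t, Continuous (F t)) (hF' : Continuous F'.uncurry)
    (hderiv : ∀ t x, HasDerivAt (F · x) (F' t x) t) (t : ℝ) :
    HasDerivAt (fun t => ∫ x in s, F t x ∂μ) (∫ x in s, F' t x ∂μ) t := by
  obtain ⟨C, hC⟩ := ((isCompact_closedBall t 1).prod hK).exists_bound_of_continuousOn
    hF'.continuousOn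
  exact (hasDerivAt_integral_of_dominated_loc_of_deriv_le (closedBall_mem_nhds t one_pos)
    (.of_forall fun t => (hF t).aestronglyMeasurable)
    (((hF t).locallyIntegrable.integrableOn_isCompact hK).mono_set hsK)
    (hF'.uncurry_left t).aestronglyMeasurable
    ((ae_restrict_mem hs).mono fun x hx t ht => hC (t, x) ⟨ht, hsK hx⟩)
    (integrableOn_const ((measure_mono hsK).trans_lt hK.measure_lt_top).ne)
    (.of_forall fun x t _ => hderiv t x)).2

section Lattice

variable {ι E : Type*} [NormedAddCommGroup E] [NormedSpace ℝ E] {b : Module.Basis ι ℝ E}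

lemma periodic_of_mem_span {α : Type*} {f : E → α} (hf : ∀ i, Function.Periodic f (b i)) {v : E}
    (hv : v ∈ Submodule.span ℤ (range b)) : Function.Periodic f v := by
  induction hv using Submodule.span_induction with
  | mem v h => obtain ⟨i, rfl⟩ := h; exact hf i
  | zero => simp [Function.Periodic]
  | add v w _ _ hv hw => exact hv.add_period hw
  | smul m v _ hv => exact hv.zsmul m

variable [FiniteDimensional ℝ E]

lemma isCompact_closure_fundamentalDomain (b : Module.Basis ι ℝ E) :
    IsCompact (closure (ZSpan.fundamentalDomain b)) :=
  have := Module.Finite.finite_basis b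
  (ZSpan.fundamentalDomain_isBounded b).isCompact_closure

variable [MeasurableSpace E]

lemma measurableSet_fundamentalDomain [OpensMeasurableSpace E] (b : Module.Basis ι ℝ E) :
    MeasurableSet (ZSpan.fundamentalDomain b) :=
  have := Module.Finite.finite_basis b
  ZSpan.fundamentalDomain_measurableSet b

variable {G : Type*} [NormedAddCommGroup G] {μ : Measure E}

lemma integrableOn_fundamentalDomain [OpensMeasurableSpace E] [IsLocallyFiniteMeasure μ]
    {f : E → G} (hf : Continuous f) : IntegrableOn f (ZSpan.fundamentalDomain b) μ :=
  (hf.locallyIntegrable.integrableOn_isCompact (isCompact_closure_fundamentalDomain b)).mono_set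
    subset_closure

variable [NormedSpace ℝ G]

open scoped Pointwise in
lemma integral_fundamentalDomain_add_right [BorelSpace E] [μ.IsAddLeftInvariant]
    {f : E → G} (hf : ∀ i, Function.Periodic f (b i)) (v : E) :
    ∫ x in ZSpan.fundamentalDomain b, f (x + v) ∂μ = ∫ x in ZSpan.fundamentalDomain b, f x ∂μ := by
  have := Module.Finite.finite_basis b
  have hinv : VAddInvariantMeasure (Submodule.span ℤ (range b)) E μ :=
    inferInstanceAs (VAddInvariantMeasure (Submodule.span ℤ (range b)).toAddSubgroup E μ)
  have hD := ZSpan.isAddFundamentalDomain b μ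
  calc ∫ x in ZSpan.fundamentalDomain b, f (x + v) ∂μ
      = ∫ x in ZSpan.fundamentalDomain b, f (v +ᵥ x) ∂μ := by simp only [vadd_eq_add, add_comm]
    _ = ∫ x in v +ᵥ ZSpan.fundamentalDomain b, f x ∂μ :=
      ((measurePreserving_vadd v μ).setIntegral_image_emb
        (measurableEmbedding_const_vadd v) _ _).symm
    _ = ∫ x in ZSpan.fundamentalDomain b, f x ∂μ :=
      (hD.vadd_of_comm v).setIntegral_eq hD (f := f) fun g x => by
        rw [Submodule.vadd_def, vadd_eq_add, add_comm, periodic_of_mem_span hf g.2]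

lemma continuous_setIntegral_fundamentalDomain [OpensMeasurableSpace E]
    [IsLocallyFiniteMeasure μ] {X : Type*} [TopologicalSpace X] [FirstCountableTopology X]
    [LocallyCompactSpace X] {F : X → E → G}
    (hF : Continuous F.uncurry) :
    Continuous fun p => ∫ x in ZSpan.fundamentalDomain b, F p x ∂μ := by
  simpa only [Measure.restrict_restrict_of_subset subset_closure,
    Measure.restrict_restrict isClosed_closure.measurableSet, inter_eq_right.2 subset_closure]
    using continuous_parametric_integral_of_continuous
      (μ := μ.restrict (ZSpan.fundamentalDomain b)) hF (isCompact_closure_fundamentalDomain b)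

end Lattice

lemma periodic_fderiv {E F : Type*} [NormedAddCommGroup E] [NormedSpace ℝ E]
    [NormedAddCommGroup F] [NormedSpace ℝ F] {u : E → F} {c : E} (hu : Function.Periodic u c) :
    Function.Periodic (fderiv ℝ u) c := fun x => by
  rw [← fderiv_comp_add_right, funext hu]

section CrossCorrelation

variable {ι E F : Type*} [NormedAddCommGroup E] [NormedSpace ℝ E] [MeasurableSpace E]
  [NormedAddCommGroup F] [InnerProductSpace ℝ F] {b : Module.Basis ι ℝ E} {μ : Measure E}

/-- The cross-correlation of two vector fields on the torus `E / ⨁ ℤ bᵢ` at lag `v`; the fields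
are encoded as `b`-periodic functions on `E`, integrated over the half-open cell spanned by `b`. -/
def crossCorr (b : Module.Basis ι ℝ E) (μ : Measure E) (f g : E → F) (v : E) : ℝ :=
  ∫ x in ZSpan.fundamentalDomain b, ⟪f x, g (x + v)⟫ ∂μ

lemma crossCorr_self_zero (f : E → F) :
    crossCorr b μ f f 0 = ∫ x in ZSpan.fundamentalDomain b, ‖f x‖ ^ 2 ∂μ := by
  simp only [crossCorr, add_zero, real_inner_self_eq_norm_sq]

variable [BorelSpace E] [FiniteDimensional ℝ E] {f g u : E → F}

lemma crossCorr_comm [μ.IsAddLeftInvariant] (hf : ∀ i, Function.Periodic f (b i))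
    (hg : ∀ i, Function.Periodic g (b i)) (v : E) :
    crossCorr b μ f g v = crossCorr b μ g f (-v) := by
  have hfg : ∀ i, Function.Periodic (fun x => ⟪f x, g (x + v)⟫) (b i) := fun i x => by
    simp only [add_right_comm x (b i) v, hf i _, hg i _]
  simpa only [crossCorr, neg_add_cancel_right, real_inner_comm]
    using (integral_fundamentalDomain_add_right (μ := μ) hfg (-v)).symm

variable [IsLocallyFiniteMeasure μ]

lemma hasDerivAt_crossCorr_smul (hf : Continuous f) (hg : ContDiff ℝ 1 g) (n : E) (s : ℝ) :
    HasDerivAt (fun s : ℝ => crossCorr b μ f g (s • n))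
      (crossCorr b μ f (fderiv ℝ g · n) (s • n)) s := by
  have hcont := hg.continuous
  have hcont' : Continuous fun p : ℝ × E => ⟪f p.2, fderiv ℝ g (p.2 + p.1 • n) n⟫ :=
    (hf.comp continuous_snd).inner
      (((hg.continuous_fderiv one_ne_zero).comp (by fun_prop)).clm_apply continuous_const)
  refine hasDerivAt_setIntegral_of_subset_isCompact (isCompact_closure_fundamentalDomain b)
    subset_closure (measurableSet_fundamentalDomain b) (F := fun t x => ⟪f x, g (x + t • n)⟫)
    (F' := fun t x => ⟪f x, fderiv ℝ g (x + t • n) n⟫) (fun t => by fun_prop) hcont'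
    (fun t x => ?_) s
  have hline : HasDerivAt (fun t : ℝ => x + t • n) n t := by
    simpa using ((hasDerivAt_id t).smul_const n).const_add x
  have hcomp := (hg.differentiable one_ne_zero (x + t • n)).hasFDerivAt.comp_hasDerivAt t hline
  simpa using (hasDerivAt_const t (f x)).inner ℝ hcomp

lemma hasDerivAt_integral_sphere_crossCorr {σ : Measure (sphere (0 : E) 1)} [IsFiniteMeasure σ]
    (hf : Continuous f) (hg : ContDiff ℝ 1 g) (r : ℝ) :
    HasDerivAt (fun r : ℝ => ∫ n : sphere (0 : E) 1, crossCorr b μ f g (r • (n : E)) ∂σ)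
      (∫ n : sphere (0 : E) 1, crossCorr b μ f (fderiv ℝ g · n) (r • (n : E)) ∂σ) r := by
  have hg₀ := hg.continuous
  have hcont : ∀ r : ℝ,
      Continuous fun n : sphere (0 : E) 1 => crossCorr b μ f g (r • (n : E)) := fun r =>
    continuous_setIntegral_fundamentalDomain (by unfold Function.uncurry; fun_prop)
  have hcont' : Continuous fun p : ℝ × sphere (0 : E) 1 =>
      crossCorr b μ f (fderiv ℝ g · p.2) (p.1 • (p.2 : E)) :=
    continuous_setIntegral_fundamentalDomain <| (hf.comp continuous_snd).inner <|
      ((hg.continuous_fderiv one_ne_zero).comp (by fun_prop)).clm_apply (by fun_prop)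
  simpa only [setIntegral_univ] using hasDerivAt_setIntegral_of_subset_isCompact (μ := σ)
    (F' := fun r n => crossCorr b μ f (fderiv ℝ g · n) (r • (n : E)))
    isCompact_univ subset_rfl .univ hcont hcont'
    (fun t n => hasDerivAt_crossCorr_smul hf hg n t) r

lemma integral_norm_fderiv_apply_sq_le (hu : ContDiff ℝ 1 u) {n : E} (hn : ‖n‖ ≤ 1) :
    ∫ x in ZSpan.fundamentalDomain b, ‖fderiv ℝ u x n‖ ^ 2 ∂μ
      ≤ ∫ x in ZSpan.fundamentalDomain b, ‖fderiv ℝ u x‖ ^ 2 ∂μ := by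
  have hcont := hu.continuous_fderiv one_ne_zero
  exact integral_mono
    (integrableOn_fundamentalDomain ((hcont.clm_apply continuous_const).norm.pow 2))
    (integrableOn_fundamentalDomain (hcont.norm.pow 2)) fun x =>
    pow_le_pow_left₀ (norm_nonneg _) ((fderiv ℝ u x).unit_le_opNorm n hn) 2

variable [μ.IsAddLeftInvariant]

lemma abs_crossCorr_self_le (hf : Continuous f) (hper : ∀ i, Function.Periodic f (b i)) (v : E) :
    |crossCorr b μ f f v| ≤ crossCorr b μ f f 0 := by
  have hyoung : ∀ x, ‖⟪f x, f (x + v)⟫‖ ≤ (‖f x‖ ^ 2 + ‖f (x + v)‖ ^ 2) / 2 := fun x => by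
    have := norm_inner_le_norm (𝕜 := ℝ) (f x) (f (x + v))
    linarith [two_mul_le_add_sq ‖f x‖ ‖f (x + v)‖]
  have hshift : ∫ x in ZSpan.fundamentalDomain b, ‖f (x + v)‖ ^ 2 ∂μ
      = ∫ x in ZSpan.fundamentalDomain b, ‖f x‖ ^ 2 ∂μ :=
    integral_fundamentalDomain_add_right (f := fun x => ‖f x‖ ^ 2)
      (fun i x => by simp only [hper i x]) v
  calc |crossCorr b μ f f v|
      ≤ ∫ x in ZSpan.fundamentalDomain b, (‖f x‖ ^ 2 + ‖f (x + v)‖ ^ 2) / 2 ∂μ :=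
        norm_integral_le_of_norm_le (integrableOn_fundamentalDomain (by fun_prop))
          (.of_forall hyoung)
    _ = crossCorr b μ f f 0 := by
        rw [integral_div, integral_add (integrableOn_fundamentalDomain (by fun_prop))
          (integrableOn_fundamentalDomain (by fun_prop)), hshift, add_self_div_two,
          crossCorr_self_zero]

lemma hasDerivAt_crossCorr_fderiv_smul (hu : ContDiff ℝ 1 u)
    (hper : ∀ i, Function.Periodic u (b i)) (n : E) (s : ℝ) :
    HasDerivAt (fun s : ℝ => crossCorr b μ u (fderiv ℝ u · n) (s • n))
      (-crossCorr b μ (fderiv ℝ u · n) (fderiv ℝ u · n) (s • n)) s := by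
  have hper' : ∀ i, Function.Periodic (fderiv ℝ u · n) (b i) := fun i =>
    (periodic_fderiv (hper i)).comp (· n)
  have hcont : Continuous (fderiv ℝ u · n) :=
    (hu.continuous_fderiv one_ne_zero).clm_apply continuous_const
  rw [crossCorr_comm hper' hper']
  simp_rw [crossCorr_comm (μ := μ) hper hper', ← neg_smul]
  simpa [Function.comp_def] using
    (hasDerivAt_crossCorr_smul (b := b) (μ := μ) hcont hu n (-s)).scomp s (hasDerivAt_neg s)

lemma crossCorr_fderiv_zero (hu : ContDiff ℝ 1 u) (hper : ∀ i, Function.Periodic u (b i)) (n : E) :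
    crossCorr b μ u (fderiv ℝ u · n) 0 = 0 := by
  have hmax : IsLocalMax (fun s : ℝ => crossCorr b μ u u (s • n)) 0 := .of_forall fun s => by
    simpa only [zero_smul] using (abs_le.1 (abs_crossCorr_self_le hu.continuous hper (s • n))).2
  simpa only [zero_smul]
    using hmax.hasDerivAt_eq_zero (hasDerivAt_crossCorr_smul hu.continuous hu n 0)

lemma abs_crossCorr_fderiv_smul_le (hu : ContDiff ℝ 1 u) (hper : ∀ i, Function.Periodic u (b i))
    (n : E) (s : ℝ) :
    |crossCorr b μ u (fderiv ℝ u · n) (s • n)|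
      ≤ |s| * ∫ x in ZSpan.fundamentalDomain b, ‖fderiv ℝ u x n‖ ^ 2 ∂μ := by
  have hper' : ∀ i, Function.Periodic (fderiv ℝ u · n) (b i) := fun i =>
    (periodic_fderiv (hper i)).comp (· n)
  have hcont : Continuous (fderiv ℝ u · n) :=
    (hu.continuous_fderiv one_ne_zero).clm_apply continuous_const
  have hmean := convex_univ.norm_image_sub_le_of_norm_hasDerivWithin_le
    (fun t _ => (hasDerivAt_crossCorr_fderiv_smul (μ := μ) hu hper n t).hasDerivWithinAt)
    (fun t _ => (norm_neg _).trans_le (abs_crossCorr_self_le hcont hper' (t • n)))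
    (mem_univ 0) (mem_univ s)
  simpa only [zero_smul, crossCorr_fderiv_zero hu hper, sub_zero, crossCorr_self_zero,
    Real.norm_eq_abs, mul_comm] using hmean

theorem statement13_general {σ : Measure (sphere (0 : E) 1)} [IsProbabilityMeasure σ]
    (hu : ContDiff ℝ 1 u) (hper : ∀ i, Function.Periodic u (b i)) (r : ℝ) :
    |deriv (fun r : ℝ => ∫ n : sphere (0 : E) 1, crossCorr b μ u u (r • (n : E)) ∂σ) r|
      ≤ |r| * ∫ x in ZSpan.fundamentalDomain b, ‖fderiv ℝ u x‖ ^ 2 ∂μ := by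
  have hdir : ∀ n : sphere (0 : E) 1, ‖crossCorr b μ u (fderiv ℝ u · n) (r • (n : E))‖
      ≤ |r| * ∫ x in ZSpan.fundamentalDomain b, ‖fderiv ℝ u x‖ ^ 2 ∂μ := fun n =>
    (abs_crossCorr_fderiv_smul_le hu hper (n : E) r).trans <| mul_le_mul_of_nonneg_left
      (integral_norm_fderiv_apply_sq_le hu (norm_eq_of_mem_sphere n).le) (abs_nonneg r)
  rw [(hasDerivAt_integral_sphere_crossCorr (b := b) (μ := μ) hu.continuous hu r).deriv]
  simpa using norm_integral_le_of_norm_le_const (μ := σ) (.of_forall hdir)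

end CrossCorrelation

lemma opNorm_sq_le_sum_orthonormalBasis {ι E F : Type*} [Fintype ι] [NormedAddCommGroup E]
    [InnerProductSpace ℝ E] [SeminormedAddCommGroup F] [NormedSpace ℝ F]
    (v : OrthonormalBasis ι ℝ E) (L : E →L[ℝ] F) : ‖L‖ ^ 2 ≤ ∑ j, ‖L (v j)‖ ^ 2 := by
  have hle : ‖L‖ ≤ √(∑ j, ‖L (v j)‖ ^ 2) := L.opNorm_le_bound (sqrt_nonneg _) fun x => by
    calc ‖L x‖ = ‖∑ j, v.repr x j • L (v j)‖ := by
          simp only [← map_smul, ← map_sum, v.sum_repr]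
      _ ≤ ∑ j, ‖v.repr x j‖ * ‖L (v j)‖ := norm_sum_le_of_le _ fun j _ => norm_smul_le _ _
      _ ≤ √(∑ j, ‖v.repr x j‖ ^ 2) * √(∑ j, ‖L (v j)‖ ^ 2) := sum_mul_le_sqrt_mul_sqrt _ _ _
      _ = √(∑ j, ‖L (v j)‖ ^ 2) * ‖x‖ := by
          rw [← EuclideanSpace.norm_eq, v.repr.norm_map, mul_comm]
  exact (Real.le_sqrt (norm_nonneg _) (by positivity)).1 hle

lemma fundDom_eq_fundamentalDomain :
    fundDom = ZSpan.fundamentalDomain (EuclideanSpace.basisFun (Fin 3) ℝ).toBasis := by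
  ext x
  simp [fundDom, ZSpan.mem_fundamentalDomain]

lemma sphμ_real_univ : sphμ.real univ = 4 * π := by
  have hball : (volume : Measure E3).real (ball 0 1) = π * 4 / 3 := by
    rw [measureReal_def, EuclideanSpace.volume_ball_fin_three, ENNReal.ofReal_one, one_pow, one_mul,
      ENNReal.toReal_ofReal (by positivity)]
  rw [sphμ, Measure.toSphere_real_apply_univ, hball, finrank_euclideanSpace_fin]
  push_cast
  ring

lemma one_div_four_pi_mul_integral_sphμ (f : sphere (0 : E3) 1 → ℝ) :
    1 / (4 * π) * ∫ n, f n ∂sphμ = ⨍ n, f n ∂sphμ := by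
  rw [average_eq, sphμ_real_univ, one_div, smul_eq_mul]

lemma norm_fderiv_sq_le_gradSq (u : E3 → E3) (x : E3) : ‖fderiv ℝ u x‖ ^ 2 ≤ gradSq u x := by
  calc ‖fderiv ℝ u x‖ ^ 2
      ≤ ∑ j, ‖fderiv ℝ u x (e3 j)‖ ^ 2 := by
        simpa [e3] using
          opNorm_sq_le_sum_orthonormalBasis (EuclideanSpace.basisFun (Fin 3) ℝ) (fderiv ℝ u x)
    _ = gradSq u x := by
        simp only [EuclideanSpace.real_norm_sq_eq, gradSq]
        exact Finset.sum_comm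

lemma integral_norm_fderiv_sq_le_integral_gradSq {u : E3 → E3} (hu : ContDiff ℝ 1 u) :
    ∫ x in fundDom, ‖fderiv ℝ u x‖ ^ 2 ≤ ∫ x in fundDom, gradSq u x := by
  have hcont := hu.continuous_fderiv one_ne_zero
  rw [fundDom_eq_fundamentalDomain]
  exact integral_mono (integrableOn_fundamentalDomain (hcont.norm.pow 2))
    (integrableOn_fundamentalDomain (by unfold gradSq; fun_prop)) (norm_fderiv_sq_le_gradSq u)

/-- For `u ∈ H¹(𝕋³;ℝ³)` and the spherically averaged autocorrelation
`Γ̄(ℓ) = (1/(4π)) ∫_{S²} ∫_{𝕋³} u(x)·u(x+ℓn) dx dS(n)`, we have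
`|Γ̄'(ℓ)| ≤ ℓ ‖∇u‖²_{L²}` for all `ℓ > 0`. -/
theorem statement13 (u : E3 → E3) (hu : ContDiff ℝ 1 u)
    (hper : ∀ (x : E3) (k : Fin 3), u (x + e3 k) = u x)
    (ℓ : ℝ) (hℓ : 0 < ℓ) :
    |deriv (fun ℓ' : ℝ => (1 / (4 * π)) * ∫ n : Metric.sphere (0:E3) 1,
        (∫ x in fundDom, ⟪u x, u (x + ℓ' • (n : E3))⟫) ∂sphμ) ℓ|
      ≤ ℓ * ∫ x in fundDom, gradSq u x := by
  have : NeZero sphμ := ⟨Measure.toSphere_ne_zero _⟩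
  have : IsFiniteMeasure sphμ := inferInstanceAs (IsFiniteMeasure (volume : Measure E3).toSphere)
  have hper' : ∀ i, Function.Periodic u ((EuclideanSpace.basisFun (Fin 3) ℝ).toBasis i) :=
    fun i x => by simpa [e3] using hper x i
  have hderiv := statement13_general (μ := volume) (σ := (sphμ univ)⁻¹ • sphμ) hu hper' ℓ
  simp only [crossCorr, ← fundDom_eq_fundamentalDomain, abs_of_pos hℓ] at hderiv
  simp only [one_div_four_pi_mul_integral_sphμ]
  exact hderiv.trans
    (mul_le_mul_of_nonneg_left (integral_norm_fderiv_sq_le_integral_gradSq hu) hℓ.le)
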